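/- Let m, M ≥ 1, 0 < σ < 1, 1 ≤ p < ∞ and c > 0. Let Ω ⊂ ℝ^m be an open set such that |B^m_λ(z) ∩ Ω| ≥ c λ^m for every z ∈ Ω and every 0 < λ ≤ (1/2) diam Ω. Let u : Ω → ℝ be measurable and define w : Ω → [0, +∞] by w(x) = ∫_Ω |u(x) − u(y)|^p / |x − y|^{m+σp} dy. Then there is a constant C > 0 depending only on m, M, σ, p and c such that for every open set ω ⊂ ℝ^M and every Lipschitz map γ : ω → Ω with w ∘ γ summable on ω, one has |u ∘ γ|_{W^{σ,p}(ω)} ≤ C (Lip γ)^σ (∫_ω w ∘ γ)^{1/p}, where Lip γ is the Lipschitz seminorm of γ. -/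

import Mathlib

open MeasureTheory Set Metric
open scoped ENNReal NNReal
noncomputable section

/-- `ℝ^m` with the Euclidean norm. -/
abbrev Eucl (n : ℕ) : Type := EuclideanSpace ℝ (Fin n)

/-- The `p`-th power of the Gagliardo seminorm on a subset of `ℝ^M`. -/
noncomputable def gagliardoPow (M : ℕ) (σ p : ℝ) (A : Set (Eucl M)) (u : Eucl M → ℝ) : ℝ≥0∞ :=
  ∫⁻ x in A, ∫⁻ y in A, (‖u x - u y‖₊ : ℝ≥0∞) ^ p / (‖x - y‖₊ : ℝ≥0∞) ^ ((M : ℝ) + σ * p)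

/-- The Gagliardo seminorm `|u|_{W^{σ,p}(A)}`. -/
noncomputable def gagliardoSeminorm (M : ℕ) (σ p : ℝ) (A : Set (Eucl M)) (u : Eucl M → ℝ) :
    ℝ≥0∞ :=
  gagliardoPow M σ p A u ^ (1 / p)

/-- The detector `w(x) = ∫_Ω |u(x) - u(y)|^p / |x - y|^{m + σp} dy`. -/
noncomputable def fugledeDetector (m : ℕ) (σ p : ℝ) (Ω : Set (Eucl m)) (u : Eucl m → ℝ)
    (x : Eucl m) : ℝ≥0∞ :=
  ∫⁻ y in Ω, (‖u x - u y‖₊ : ℝ≥0∞) ^ p / (‖x - y‖₊ : ℝ≥0∞) ^ ((m : ℝ) + σ * p)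

/-!
For `x, y ∈ ω`, compare `u (γ x)` and `u (γ y)` with the values of `u` on the ball around `γ x` of
radius `|γ x - γ y| / 2`. Lower regularity of `Ω` bounds the measure of this ball from below, so
`|u (γ x) - u (γ y)|^p` is controlled by the energy densities of order `r = d` of `u` at `γ x` and
`γ y`, truncated to distances below `2 K |x - y|`. Divide by `|x - y|^{s + σp}` and integrate: by
Tonelli, a point `z` contributes the integral of `|x - y|^{-(s + σp)}` over
`|x - y| > |γ x - z| / (2K)`. Upper regularity bounds it by a multiple of
`(2K)^{σp} |γ x - z|^{-σp}`, and this weight turns order `d` into order `d + σp`, the detector.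
-/

variable {X Y Z : Type*}

section GagliardoDensity

variable [PseudoEMetricSpace X] [MeasurableSpace X] [PseudoEMetricSpace Z]

/-- The density at `x` of the `p`-energy of `u` against the kernel `|x - y|⁻ʳ`, in terms of extended
distances. With `r = m + σp` and `ν` restricted to `Ω` it is the detector of the theorem; its
integral over `ω ⊆ ℝ^M`, with `r = M + σp`, is the `p`-th power of the Gagliardo seminorm. -/
def gagliardoDensity (ν : Measure X) (r p : ℝ) (u : X → Z) (x : X) : ℝ≥0∞ :=
  ∫⁻ y, edist (u x) (u y) ^ p / edist x y ^ r ∂ν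

lemma gagliardoDensity_mono_measure {ν ν' : Measure X} (h : ν ≤ ν') (r p : ℝ) (u : X → Z) (x : X) :
    gagliardoDensity ν r p u x ≤ gagliardoDensity ν' r p u x :=
  lintegral_mono' h le_rfl

lemma gagliardoDensity_comap_subtype (ν : Measure X) {S : Set X} (hS : MeasurableSet S) (r p : ℝ)
    (u : X → Z) (x : S) :
    gagliardoDensity (ν.comap (↑)) r p (fun y : S => u y) x =
      gagliardoDensity (ν.restrict S) r p u x :=
  lintegral_subtype_comap hS fun y => edist (u x) (u y) ^ p / edist (x : X) y ^ r

lemma gagliardoDensity_restrict_eball [OpensMeasurableSpace X] (ν : Measure X) (r p : ℝ)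
    (u : X → Z) (a x : X) (ρ : ℝ≥0∞) :
    gagliardoDensity (ν.restrict (eball a ρ)) r p u x =
      ∫⁻ z, (if edist z a < ρ then edist (u x) (u z) ^ p / edist x z ^ r else 0) ∂ν := by
  rw [gagliardoDensity, ← lintegral_indicator measurableSet_eball]
  refine lintegral_congr fun z => ?_
  by_cases hz : edist z a < ρ
  · rw [indicator_of_mem (mem_eball.2 hz), if_pos hz]
  · rw [indicator_of_notMem (mt mem_eball.1 hz), if_neg hz]

lemma measurable_gagliardoDensity_restrict_eball [OpensMeasurableSpace X]
    [SecondCountableTopology X] [MeasurableSpace Z] [OpensMeasurableSpace Z]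
    [SecondCountableTopology Z] (ν : Measure X) [SFinite ν] (r p : ℝ) {u : X → Z}
    (hu : Measurable u) [MeasurableSpace Y] {a : Y → X} (ha : Measurable a) {ρ : Y → ℝ≥0∞}
    (hρ : Measurable ρ) :
    Measurable fun y => gagliardoDensity (ν.restrict (eball (a y) (ρ y))) r p u (a y) := by
  simp only [gagliardoDensity_restrict_eball]
  refine Measurable.lintegral_prod_right' (f := fun q : Y × X => if edist q.2 (a q.1) < ρ q.1 then
    edist (u (a q.1)) (u q.2) ^ p / edist (a q.1) q.2 ^ r else 0) ?_
  refine Measurable.ite (measurableSet_lt (by fun_prop) (by fun_prop)) ?_ measurable_const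
  fun_prop

lemma lintegral_gagliardoDensity_restrict_eball_mul [OpensMeasurableSpace X] [MeasurableSpace Z]
    [OpensMeasurableSpace Z] {ν : Measure X} [SFinite ν] [MeasurableSpace Y] {μ : Measure Y}
    [SFinite μ] {u : X → Z} (hu : Measurable u) (r p : ℝ) (a : X)
    {ρ k : Y → ℝ≥0∞} (hρ : Measurable ρ) (hk : Measurable k) :
    ∫⁻ y, gagliardoDensity (ν.restrict (eball a (ρ y))) r p u a * k y ∂μ =
      ∫⁻ z, edist (u a) (u z) ^ p / edist a z ^ r *
        ∫⁻ y, (if edist z a < ρ y then k y else 0) ∂μ ∂ν := by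
  let N (z : X) : ℝ≥0∞ := edist (u a) (u z) ^ p / edist a z ^ r
  have hN : Measurable N := by fun_prop
  calc ∫⁻ y, gagliardoDensity (ν.restrict (eball a (ρ y))) r p u a * k y ∂μ
      = ∫⁻ y, ∫⁻ z, N z * (if edist z a < ρ y then k y else 0) ∂ν ∂μ := by
        refine lintegral_congr fun y => ?_
        rw [gagliardoDensity_restrict_eball, ← lintegral_mul_const _
          (Measurable.ite (measurableSet_lt (by fun_prop) measurable_const) hN measurable_const)]
        simp only [N, mul_ite, ite_mul, mul_zero, zero_mul]
    _ = ∫⁻ z, ∫⁻ y, N z * (if edist z a < ρ y then k y else 0) ∂μ ∂ν := by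
        refine lintegral_lintegral_swap (Measurable.aemeasurable ?_)
        exact (hN.comp measurable_snd).mul (Measurable.ite
          (measurableSet_lt (by fun_prop) (by fun_prop)) (by fun_prop) measurable_const)
    _ = ∫⁻ z, N z * ∫⁻ y, (if edist z a < ρ y then k y else 0) ∂μ ∂ν :=
        lintegral_congr fun z => lintegral_const_mul _
          (Measurable.ite (measurableSet_lt measurable_const hρ) hk measurable_const)

end GagliardoDensity

lemma lintegral_lintegral_add_swap_le [MeasurableSpace Y] {μ : Measure Y} [SFinite μ]
    {F H : Y → Y → ℝ≥0∞} (hH : Measurable (Function.uncurry H)) {C : ℝ≥0∞} (hC : C ≠ ⊤)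
    (h : ∀ x y, F x y ≤ C * (H x y + H y x)) :
    ∫⁻ x, ∫⁻ y, F x y ∂μ ∂μ ≤ 2 * C * ∫⁻ x, ∫⁻ y, H x y ∂μ ∂μ := by
  calc ∫⁻ x, ∫⁻ y, F x y ∂μ ∂μ
      ≤ ∫⁻ x, ∫⁻ y, C * (H x y + H y x) ∂μ ∂μ := lintegral_mono fun x => lintegral_mono (h x)
    _ = C * (∫⁻ x, ∫⁻ y, H x y ∂μ ∂μ + ∫⁻ x, ∫⁻ y, H y x ∂μ ∂μ) := by
        simp_rw [lintegral_const_mul' _ _ hC, lintegral_add_left hH.of_uncurry_left]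
        have hHi : Measurable fun x => ∫⁻ y, H x y ∂μ := hH.lintegral_prod_right'
        rw [lintegral_add_left hHi]
    _ = 2 * C * ∫⁻ x, ∫⁻ y, H x y ∂μ ∂μ := by
        rw [← lintegral_lintegral_swap hH.aemeasurable]
        ring

lemma edist_rpow_le_two_rpow_mul [PseudoEMetricSpace Z] {p : ℝ} (hp : 0 ≤ p) (x y z : Z) :
    edist x y ^ p ≤ 2 ^ p * (edist x z ^ p + edist y z ^ p) := by
  calc edist x y ^ p ≤ (edist x z + edist y z) ^ p := by gcongr; exact edist_triangle_right x y z
    _ ≤ (2 * max (edist x z) (edist y z)) ^ p := by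
      rw [two_mul]; gcongr <;> simp
    _ = 2 ^ p * max (edist x z ^ p) (edist y z ^ p) := by
      rw [ENNReal.mul_rpow_of_nonneg _ _ hp, (ENNReal.monotone_rpow_of_nonneg hp).map_max]
    _ ≤ 2 ^ p * (edist x z ^ p + edist y z ^ p) := by
      gcongr; exact max_le_add_of_nonneg zero_le zero_le

section Tail

variable [PseudoMetricSpace Y] [MeasurableSpace Y] {μ : Measure Y} {A s q : ℝ}

/-- Upper Ahlfors `s`-regularity with constant `A`, at all radii. It abstracts what the composition
estimate uses of Lebesgue measure on `ℝ^M`, where `s = M`. -/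
def UpperAhlforsRegular (μ : Measure Y) (s A : ℝ) : Prop :=
  ∀ x (r : ℝ), 0 < r → μ (ball x r) ≤ ENNReal.ofReal (A * r ^ s)

lemma UpperAhlforsRegular.comap_subtype (hμ : UpperAhlforsRegular μ s A) {S : Set Y}
    (hS : MeasurableSet S) :
    UpperAhlforsRegular (μ.comap ((↑) : S → Y)) s A := fun x r hr => by
  rw [comap_subtype_coe_apply hS]
  exact (measure_mono (image_subset_iff.2 fun _ hy => hy)).trans (hμ x r hr)

lemma UpperAhlforsRegular.sigmaFinite [SecondCountableTopology Y]
    (hμ : UpperAhlforsRegular μ s A) : SigmaFinite μ :=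
  have : IsLocallyFiniteMeasure μ :=
    ⟨fun x => ⟨ball x 1, ball_mem_nhds x one_pos, (hμ x 1 one_pos).trans_lt ENNReal.ofReal_lt_top⟩⟩
  inferInstance

/-- The constant `2^s A ∑ₖ 2^{-kq}` obtained by summing `|x - y|^{-(s + q)}` over the dyadic annuli
around `x`. -/
def dyadicTailConst (s A q : ℝ) : ℝ≥0∞ :=
  ENNReal.ofReal (A * 2 ^ s) * (1 - 2 ^ (-q))⁻¹

lemma dyadicTailConst_ne_top (s A : ℝ) (hq : 0 < q) : dyadicTailConst s A q ≠ ⊤ := by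
  have : (2 : ℝ≥0∞) ^ (-q) < 1 := ENNReal.rpow_lt_one_of_one_lt_of_neg (by norm_num) (by linarith)
  exact ENNReal.mul_ne_top ENNReal.ofReal_ne_top (ENNReal.inv_ne_top.2 (tsub_pos_of_lt this).ne')

variable [OpensMeasurableSpace Y]

lemma UpperAhlforsRegular.setLIntegral_annulus_le (hμ : UpperAhlforsRegular μ s A)
    (hsq : 0 ≤ s + q) (x : Y) {ρ : ℝ} (hρ : 0 < ρ) :
    ∫⁻ y in {y | dist x y ∈ Ico ρ (2 * ρ)}, edist x y ^ (-(s + q)) ∂μ ≤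
      ENNReal.ofReal (A * 2 ^ s) * ENNReal.ofReal ρ ^ (-q) := by
  have hsub : {y | dist x y ∈ Ico ρ (2 * ρ)} ⊆ ball x (2 * ρ) := fun y hy => mem_ball'.2 hy.2
  have hmeas : MeasurableSet {y | dist x y ∈ Ico ρ (2 * ρ)} :=
    (continuous_const.dist continuous_id).measurable measurableSet_Ico
  calc ∫⁻ y in {y | dist x y ∈ Ico ρ (2 * ρ)}, edist x y ^ (-(s + q)) ∂μ
      ≤ ∫⁻ _ in {y | dist x y ∈ Ico ρ (2 * ρ)}, ENNReal.ofReal (ρ ^ (-(s + q))) ∂μ := by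
        refine setLIntegral_mono' hmeas fun y hy => ?_
        rw [edist_dist, ENNReal.ofReal_rpow_of_pos (hρ.trans_le hy.1)]
        exact ENNReal.ofReal_le_ofReal (Real.rpow_le_rpow_of_nonpos hρ hy.1 (by linarith))
    _ ≤ ENNReal.ofReal (ρ ^ (-(s + q))) * ENNReal.ofReal (A * (2 * ρ) ^ s) := by
        rw [setLIntegral_const]
        gcongr
        exact (measure_mono hsub).trans (hμ x _ (by positivity))
    _ = ENNReal.ofReal (A * 2 ^ s) * ENNReal.ofReal ρ ^ (-q) := by
        rw [ENNReal.ofReal_rpow_of_pos hρ, ← ENNReal.ofReal_mul (by positivity),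
          ← ENNReal.ofReal_mul' (by positivity), Real.mul_rpow zero_le_two hρ.le, neg_add,
          Real.rpow_add hρ, Real.rpow_neg hρ.le]
        congr 1
        field_simp

lemma UpperAhlforsRegular.setLIntegral_tail_le (hμ : UpperAhlforsRegular μ s A)
    (hsq : 0 ≤ s + q) (x : Y) {t : ℝ≥0∞} (ht : t ≠ 0) :
    ∫⁻ y in {y | t < edist x y}, edist x y ^ (-(s + q)) ∂μ ≤ dyadicTailConst s A q * t ^ (-q) := by
  rcases eq_or_ne t ⊤ with rfl | ht_top
  · simp
  obtain ⟨τ, hτ, rfl⟩ : ∃ τ : ℝ, 0 < τ ∧ ENNReal.ofReal τ = t :=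
    ⟨t.toReal, ENNReal.toReal_pos ht ht_top, ENNReal.ofReal_toReal ht_top⟩
  have hcover : {y | ENNReal.ofReal τ < edist x y} ⊆
      ⋃ k : ℕ, {y | dist x y ∈ Ico (2 ^ k * τ) (2 * (2 ^ k * τ))} := by
    intro y (hy : ENNReal.ofReal τ < edist x y)
    rw [edist_dist, ENNReal.ofReal_lt_ofReal_iff_of_nonneg hτ.le] at hy
    obtain ⟨k, hk, hk'⟩ := exists_nat_pow_near ((one_le_div hτ).2 hy.le) one_lt_two
    rw [le_div_iff₀ hτ] at hk
    rw [div_lt_iff₀ hτ, pow_succ', mul_assoc] at hk'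
    exact mem_iUnion.2 ⟨k, hk, hk'⟩
  calc ∫⁻ y in {y | ENNReal.ofReal τ < edist x y}, edist x y ^ (-(s + q)) ∂μ
      ≤ ∑' k : ℕ, ∫⁻ y in {y | dist x y ∈ Ico (2 ^ k * τ) (2 * (2 ^ k * τ))},
          edist x y ^ (-(s + q)) ∂μ :=
        (lintegral_mono_set hcover).trans (lintegral_iUnion_le _ _)
    _ ≤ ∑' k : ℕ, ENNReal.ofReal (A * 2 ^ s) * ENNReal.ofReal (2 ^ k * τ) ^ (-q) :=
        ENNReal.tsum_le_tsum fun k => hμ.setLIntegral_annulus_le hsq x (by positivity)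
    _ = ∑' k : ℕ, ENNReal.ofReal (A * 2 ^ s) * ENNReal.ofReal τ ^ (-q) * (2 ^ (-q)) ^ k := by
        refine tsum_congr fun k => ?_
        rw [ENNReal.ofReal_mul (p := 2 ^ k) (by positivity), ENNReal.ofReal_pow zero_le_two,
          ENNReal.ofReal_ofNat, ENNReal.mul_rpow_of_ne_top (by simp) (by simp),
          ← ENNReal.rpow_natCast, ← ENNReal.rpow_natCast, ← ENNReal.rpow_mul, ← ENNReal.rpow_mul,
          mul_comm (k : ℝ)]
        ring
    _ = dyadicTailConst s A q * ENNReal.ofReal τ ^ (-q) := by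
        rw [ENNReal.tsum_mul_left, ENNReal.tsum_geometric, dyadicTailConst]
        ring

end Tail

section LowerRegular

variable [MeasurableSpace X]

/-- Lower Ahlfors `d`-regularity of `Ω` with constant `c`, required only at radii up to half the
diameter of `Ω`. The bound on the radius is stated in `ℝ≥0∞`, so an unbounded `Ω` is tested at all
radii. -/
def LowerAhlforsRegularOn [PseudoMetricSpace X] (ν : Measure X) (Ω : Set X) (d c : ℝ) : Prop :=
  ∀ z ∈ Ω, ∀ r : ℝ, 0 < r → 2 * ENNReal.ofReal r ≤ ediam Ω →
    ENNReal.ofReal (c * r ^ d) ≤ ν (ball z r ∩ Ω)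

lemma LowerAhlforsRegularOn.restrict [PseudoMetricSpace X] {ν : Measure X} {Ω : Set X} {d c : ℝ}
    (hν : LowerAhlforsRegularOn ν Ω d c) : LowerAhlforsRegularOn (ν.restrict Ω) Ω d c :=
  fun z hz r hr hrΩ => by
    rw [Measure.restrict_eq_self ν inter_subset_right]
    exact hν z hz r hr hrΩ

lemma setLIntegral_edist_rpow_le_gagliardoDensity [PseudoEMetricSpace X] [OpensMeasurableSpace X]
    [PseudoEMetricSpace Z] (ν : Measure X) {d : ℝ} (hd : 0 ≤ d) (p : ℝ) (u : X → Z) {a : X}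
    {S : Set X} {L : ℝ≥0∞} (hL : L ≠ ⊤) (hS : S ⊆ eball a L) :
    ∫⁻ z in S, edist (u a) (u z) ^ p ∂ν ≤
      L ^ d * gagliardoDensity (ν.restrict (eball a L)) d p u a := by
  rcases eq_or_ne L 0 with rfl | hL0
  · simp [show S = ∅ by simpa using hS]
  have hLd0 : L ^ d ≠ 0 := by simp [hL0, hL]
  have hLd : L ^ d ≠ ⊤ := ENNReal.rpow_ne_top_of_nonneg hd hL
  calc ∫⁻ z in S, edist (u a) (u z) ^ p ∂ν
      ≤ ∫⁻ z in eball a L, edist (u a) (u z) ^ p ∂ν := lintegral_mono_set hS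
    _ ≤ ∫⁻ z in eball a L, L ^ d * (edist (u a) (u z) ^ p / edist a z ^ d) ∂ν := by
        refine setLIntegral_mono' measurableSet_eball fun z hz => ?_
        calc edist (u a) (u z) ^ p = L ^ d * (edist (u a) (u z) ^ p / L ^ d) :=
              (ENNReal.mul_div_cancel hLd0 hLd).symm
          _ ≤ L ^ d * (edist (u a) (u z) ^ p / edist a z ^ d) := by
              gcongr
              exact (mem_eball'.1 hz).le
    _ = L ^ d * gagliardoDensity (ν.restrict (eball a L)) d p u a :=
        lintegral_const_mul' _ _ hLd

lemma edist_rpow_mul_measure_le [MeasurableSpace Z] [PseudoEMetricSpace Z] [OpensMeasurableSpace Z]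
    (ν : Measure X) {p : ℝ} (hp : 0 ≤ p) {u : X → Z} (hu : Measurable u) (a b : X) (S : Set X) :
    edist (u a) (u b) ^ p * ν S ≤
      2 ^ p * (∫⁻ z in S, edist (u a) (u z) ^ p ∂ν + ∫⁻ z in S, edist (u b) (u z) ^ p ∂ν) := by
  calc edist (u a) (u b) ^ p * ν S = ∫⁻ _ in S, edist (u a) (u b) ^ p ∂ν :=
        (setLIntegral_const _ _).symm
    _ ≤ ∫⁻ z in S, 2 ^ p * (edist (u a) (u z) ^ p + edist (u b) (u z) ^ p) ∂ν :=
        lintegral_mono fun z => edist_rpow_le_two_rpow_mul hp _ _ _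
    _ = _ := by
        rw [lintegral_const_mul' _ _ (ENNReal.rpow_ne_top_of_nonneg hp ENNReal.ofNat_ne_top),
          lintegral_add_left (by fun_prop)]

lemma LowerAhlforsRegularOn.two_mul_edist_rpow_le [PseudoMetricSpace X] {ν : Measure X} {Ω : Set X}
    {d c : ℝ} (hν : LowerAhlforsRegularOn ν Ω d c) (hc : 0 < c) {a b : X} (ha : a ∈ Ω)
    (hb : b ∈ Ω) (hab : 0 < dist a b) :
    (2 * edist a b) ^ d ≤ ENNReal.ofReal (4 ^ d / c) * ν (ball a (dist a b / 2)) := by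
  have hdiam : 2 * ENNReal.ofReal (dist a b / 2) ≤ ediam Ω := by
    rw [← ENNReal.ofReal_ofNat, ← ENNReal.ofReal_mul zero_le_two, mul_div_cancel₀ _ two_ne_zero,
      ← edist_dist]
    exact edist_le_ediam_of_mem ha hb
  calc (2 * edist a b) ^ d
      = ENNReal.ofReal (4 ^ d / c) * ENNReal.ofReal (c * (dist a b / 2) ^ d) := by
        rw [edist_dist, ← ENNReal.ofReal_ofNat, ← ENNReal.ofReal_mul zero_le_two,
          ENNReal.ofReal_rpow_of_pos (by positivity), ← ENNReal.ofReal_mul (by positivity),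
          ← mul_assoc, div_mul_cancel₀ _ hc.ne', ← Real.mul_rpow (by positivity) (by positivity)]
        ring_nf
    _ ≤ ENNReal.ofReal (4 ^ d / c) * ν (ball a (dist a b / 2)) := by
        gcongr
        exact (hν a ha _ (half_pos hab) hdiam).trans (measure_mono inter_subset_left)

variable [MetricSpace X] [OpensMeasurableSpace X] [MeasurableSpace Z] [PseudoEMetricSpace Z]
  [OpensMeasurableSpace Z] {ν : Measure X} {Ω : Set X} {d c p : ℝ} {u : X → Z}

lemma LowerAhlforsRegularOn.edist_rpow_le (hν : LowerAhlforsRegularOn ν Ω d c) (hd : 0 ≤ d)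
    (hc : 0 < c) (hp : 0 < p) (hu : Measurable u) {a b : X} (ha : a ∈ Ω) (hb : b ∈ Ω) :
    edist (u a) (u b) ^ p ≤ 2 ^ p * ENNReal.ofReal (4 ^ d / c) *
      (gagliardoDensity (ν.restrict (eball a (2 * edist a b))) d p u a +
        gagliardoDensity (ν.restrict (eball b (2 * edist a b))) d p u b) := by
  rcases eq_or_ne a b with rfl | hab
  · simp [hp]
  have hdist : 0 < dist a b := dist_pos.2 hab
  set L := 2 * edist a b with hL
  set B := ball a (dist a b / 2)
  have hL_top : L ≠ ⊤ := ENNReal.mul_ne_top ENNReal.ofNat_ne_top (edist_ne_top a b)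
  have hLd : L ^ d ≠ ⊤ := ENNReal.rpow_ne_top_of_nonneg hd hL_top
  have hLd0 : L ^ d ≠ 0 := by simp [hL, hab, hd]
  have heball (x : X) : eball x L = ball x (2 * dist a b) := by
    rw [hL, edist_dist, ← ENNReal.ofReal_ofNat, ← ENNReal.ofReal_mul zero_le_two, eball_ofReal]
  have hBa : B ⊆ eball a L := heball a ▸ ball_subset_ball (by linarith)
  have hBb : B ⊆ eball b L := heball b ▸ ball_subset_ball' (by linarith)
  rw [← ENNReal.mul_le_mul_iff_left hLd0 hLd]
  calc edist (u a) (u b) ^ p * L ^ d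
      ≤ edist (u a) (u b) ^ p * (ENNReal.ofReal (4 ^ d / c) * ν B) := by
        gcongr
        exact hν.two_mul_edist_rpow_le hc ha hb hdist
    _ = ENNReal.ofReal (4 ^ d / c) * (edist (u a) (u b) ^ p * ν B) := by ring
    _ ≤ ENNReal.ofReal (4 ^ d / c) * (2 ^ p *
          (∫⁻ z in B, edist (u a) (u z) ^ p ∂ν + ∫⁻ z in B, edist (u b) (u z) ^ p ∂ν)) := by
        refine mul_le_mul_right ?_ _
        exact edist_rpow_mul_measure_le ν hp.le hu a b B
    _ ≤ ENNReal.ofReal (4 ^ d / c) * (2 ^ p *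
          (L ^ d * gagliardoDensity (ν.restrict (eball a L)) d p u a +
            L ^ d * gagliardoDensity (ν.restrict (eball b L)) d p u b)) := by
        gcongr
        · exact setLIntegral_edist_rpow_le_gagliardoDensity ν hd p u hL_top hBa
        · exact setLIntegral_edist_rpow_le_gagliardoDensity ν hd p u hL_top hBb
    _ = _ := by ring

lemma LowerAhlforsRegularOn.edist_comp_rpow_le [PseudoEMetricSpace Y]
    (hν : LowerAhlforsRegularOn ν Ω d c) (hd : 0 ≤ d) (hc : 0 < c) (hp : 0 < p)
    (hu : Measurable u) {γ : Y → X} {K : ℝ≥0} (hγ : LipschitzWith K γ) (hγΩ : ∀ x, γ x ∈ Ω)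
    (x y : Y) :
    edist (u (γ x)) (u (γ y)) ^ p ≤ 2 ^ p * ENNReal.ofReal (4 ^ d / c) *
      (gagliardoDensity (ν.restrict (eball (γ x) (2 * K * edist x y))) d p u (γ x) +
        gagliardoDensity (ν.restrict (eball (γ y) (2 * K * edist x y))) d p u (γ y)) := by
  have henlarge (z : X) : gagliardoDensity (ν.restrict (eball z (2 * edist (γ x) (γ y)))) d p u z ≤
      gagliardoDensity (ν.restrict (eball z (2 * K * edist x y))) d p u z := by
    refine gagliardoDensity_mono_measure (Measure.restrict_mono (eball_subset_eball ?_) le_rfl) ..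
    rw [mul_assoc]
    gcongr
    exact hγ x y
  refine (hν.edist_rpow_le hd hc hp hu (hγΩ x) (hγΩ y)).trans ?_
  gcongr <;> exact henlarge _

end LowerRegular

section Composition

variable [MetricSpace X] [MeasurableSpace X]
  [PseudoMetricSpace Y] [MeasurableSpace Y] [OpensMeasurableSpace Y]
  [PseudoEMetricSpace Z] [MeasurableSpace Z] [OpensMeasurableSpace Z]
  {ν : Measure X} {μ : Measure Y} {d s q p c A : ℝ} {u : X → Z}

lemma UpperAhlforsRegular.lintegral_ite_edist_le (hμ : UpperAhlforsRegular μ s A)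
    (hsq : 0 ≤ s + q) (hq : 0 ≤ q) (x : Y) {δ κ : ℝ≥0∞} (hδ : δ ≠ 0) (hδ_top : δ ≠ ⊤)
    (hκ : κ ≠ ⊤) :
    ∫⁻ y, (if δ < κ * edist x y then (edist x y ^ (s + q))⁻¹ else 0) ∂μ ≤
      dyadicTailConst s A q * (κ ^ q / δ ^ q) := by
  simp only [← ENNReal.rpow_neg]
  calc ∫⁻ y, (if δ < κ * edist x y then edist x y ^ (-(s + q)) else 0) ∂μ
      ≤ ∫⁻ y in {y | δ / κ < edist x y}, edist x y ^ (-(s + q)) ∂μ := by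
        rw [← lintegral_indicator (measurableSet_lt measurable_const (by fun_prop))]
        refine lintegral_mono fun y => ?_
        split_ifs with h
        · rw [indicator_of_mem (show y ∈ {y | δ / κ < edist x y} from ENNReal.div_lt_of_lt_mul' h)]
        · exact bot_le
    _ ≤ dyadicTailConst s A q * (δ / κ) ^ (-q) :=
        hμ.setLIntegral_tail_le hsq x (ENNReal.div_ne_zero.2 ⟨hδ, hκ⟩)
    _ = dyadicTailConst s A q * (κ ^ q / δ ^ q) := by
        rw [ENNReal.rpow_neg, ENNReal.div_rpow_of_nonneg _ _ hq, ENNReal.inv_div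
          (.inr (ENNReal.rpow_ne_top_of_nonneg hq hδ_top)) (.inr (by simp [hδ, hδ_top]))]

variable [SecondCountableTopology Y] [SFinite ν]

lemma UpperAhlforsRegular.lintegral_gagliardoDensity_div_le [OpensMeasurableSpace X]
    (hμ : UpperAhlforsRegular μ s A) (hs : 0 ≤ s) (hq : 0 < q) (hp : 0 < p) (hu : Measurable u)
    (a : X) {κ : ℝ≥0∞} (hκ : κ ≠ ⊤) (x : Y) :
    ∫⁻ y, gagliardoDensity (ν.restrict (eball a (κ * edist x y))) d p u a /
        edist x y ^ (s + q) ∂μ ≤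
      dyadicTailConst s A q * κ ^ q * gagliardoDensity ν (d + q) p u a := by
  have := hμ.sigmaFinite
  have hconst : dyadicTailConst s A q * κ ^ q ≠ ⊤ :=
    ENNReal.mul_ne_top (dyadicTailConst_ne_top s A hq) (ENNReal.rpow_ne_top_of_nonneg hq.le hκ)
  simp only [div_eq_mul_inv (gagliardoDensity _ _ _ _ _)]
  rw [lintegral_gagliardoDensity_restrict_eball_mul hu d p a (by fun_prop) (by fun_prop),
    gagliardoDensity, ← lintegral_const_mul' _ _ hconst]
  refine lintegral_mono fun z => ?_
  rcases eq_or_ne a z with rfl | haz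
  · simp [hp]
  have haz0 : edist a z ≠ 0 := (edist_pos.2 haz).ne'
  have haz_top : edist a z ≠ ⊤ := edist_ne_top a z
  calc edist (u a) (u z) ^ p / edist a z ^ d *
        ∫⁻ y, (if edist z a < κ * edist x y then (edist x y ^ (s + q))⁻¹ else 0) ∂μ
      ≤ edist (u a) (u z) ^ p / edist a z ^ d *
          (dyadicTailConst s A q * (κ ^ q / edist a z ^ q)) := by
        rw [edist_comm z a]
        gcongr
        exact hμ.lintegral_ite_edist_le (by positivity) hq.le x haz0 haz_top hκ
    _ = dyadicTailConst s A q * κ ^ q * (edist (u a) (u z) ^ p / edist a z ^ (d + q)) := by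
        rw [ENNReal.rpow_add _ _ haz0 haz_top, div_eq_mul_inv _ (_ * _),
          ENNReal.mul_inv (.inl (by simp [haz0, haz_top])) (.inr (by simp [haz0, haz_top]))]
        simp only [div_eq_mul_inv]
        ring

variable [BorelSpace X] [SecondCountableTopology X] [SecondCountableTopology Z] {Ω : Set X}

lemma measurable_gagliardoDensity_eball_comp_div {γ : Y → X} (hγ : Measurable γ) (hu : Measurable u)
    (d r p : ℝ) (κ : ℝ≥0∞) :
    Measurable fun xy : Y × Y =>
      gagliardoDensity (ν.restrict (eball (γ xy.1) (κ * edist xy.1 xy.2))) d p u (γ xy.1) /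
        edist xy.1 xy.2 ^ r :=
  (measurable_gagliardoDensity_restrict_eball ν d p hu (hγ.comp measurable_fst)
    (by fun_prop : Measurable fun xy : Y × Y => κ * edist xy.1 xy.2)).div (by fun_prop)

/-- The constant of the composition estimate with `q = σp`, before taking `p`-th roots: the factor
`2^p 4^d / c` comes from averaging over balls of radius `|γ x - γ y| / 2`, the last one from the
dyadic tail estimate at scale `|γ x - z| / (2K)`. -/
def gagliardoCompConst (d s A c q p : ℝ) : ℝ≥0∞ :=
  2 * (2 ^ p * ENNReal.ofReal (4 ^ d / c)) * (dyadicTailConst s A q * 2 ^ q)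

lemma gagliardoCompConst_ne_top (d s A c : ℝ) (hq : 0 < q) (hp : 0 ≤ p) :
    gagliardoCompConst d s A c q p ≠ ⊤ := by
  have := dyadicTailConst_ne_top s A hq
  unfold gagliardoCompConst
  finiteness

lemma exists_gagliardoCompConst_rpow_le_ofReal (d s A c : ℝ) (hq : 0 < q) (hp : 0 < p) :
    ∃ C : ℝ, 0 < C ∧ gagliardoCompConst d s A c q p ^ (1 / p) ≤ ENNReal.ofReal C := by
  have htop : gagliardoCompConst d s A c q p ^ (1 / p) ≠ ⊤ :=
    ENNReal.rpow_ne_top_of_nonneg (by positivity) (gagliardoCompConst_ne_top d s A c hq hp.le)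
  refine ⟨(gagliardoCompConst d s A c q p ^ (1 / p)).toReal + 1, by positivity, ?_⟩
  rw [ENNReal.le_ofReal_iff_toReal_le htop (by positivity)]
  exact (lt_add_one _).le

theorem lintegral_gagliardoDensity_comp_le (hν : LowerAhlforsRegularOn ν Ω d c)
    (hμ : UpperAhlforsRegular μ s A) (hd : 0 ≤ d) (hs : 0 ≤ s) (hq : 0 < q) (hp : 0 < p)
    (hc : 0 < c) (hu : Measurable u) {γ : Y → X} {K : ℝ≥0} (hγ : LipschitzWith K γ)
    (hγΩ : ∀ x, γ x ∈ Ω) :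
    ∫⁻ x, gagliardoDensity μ (s + q) p (u ∘ γ) x ∂μ ≤
      gagliardoCompConst d s A c q p * K ^ q * ∫⁻ x, gagliardoDensity ν (d + q) p u (γ x) ∂μ := by
  have := hμ.sigmaFinite
  have hκ : (2 * K : ℝ≥0∞) ≠ ⊤ := by finiteness
  have hT : dyadicTailConst s A q ≠ ⊤ := dyadicTailConst_ne_top s A hq
  let H (x y : Y) : ℝ≥0∞ :=
    gagliardoDensity (ν.restrict (eball (γ x) (2 * K * edist x y))) d p u (γ x) /
      edist x y ^ (s + q)
  have hH : Measurable (Function.uncurry H) :=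
    measurable_gagliardoDensity_eball_comp_div hγ.continuous.measurable hu d (s + q) p (2 * K)
  have hptwise (x y : Y) : edist (u (γ x)) (u (γ y)) ^ p / edist x y ^ (s + q) ≤
      2 ^ p * ENNReal.ofReal (4 ^ d / c) * (H x y + H y x) := by
    simp only [H, edist_comm y x]
    rw [← ENNReal.add_div, ← mul_div_assoc]
    gcongr
    exact hν.edist_comp_rpow_le hd hc hp hu hγ hγΩ x y
  calc ∫⁻ x, gagliardoDensity μ (s + q) p (u ∘ γ) x ∂μ
      ≤ 2 * (2 ^ p * ENNReal.ofReal (4 ^ d / c)) * ∫⁻ x, ∫⁻ y, H x y ∂μ ∂μ :=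
        lintegral_lintegral_add_swap_le hH (by finiteness) hptwise
    _ ≤ 2 * (2 ^ p * ENNReal.ofReal (4 ^ d / c)) *
          ∫⁻ x, dyadicTailConst s A q * (2 * K) ^ q * gagliardoDensity ν (d + q) p u (γ x) ∂μ := by
        gcongr with x
        exact hμ.lintegral_gagliardoDensity_div_le hs hq hp hu (γ x) hκ x
    _ = gagliardoCompConst d s A c q p * K ^ q *
          ∫⁻ x, gagliardoDensity ν (d + q) p u (γ x) ∂μ := by
        rw [lintegral_const_mul' _ _ (by finiteness), ENNReal.mul_rpow_of_nonneg _ _ hq.le,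
          gagliardoCompConst]
        ring

theorem setLIntegral_gagliardoDensity_comp_le (hν : LowerAhlforsRegularOn ν Ω d c)
    (hμ : UpperAhlforsRegular μ s A) (hd : 0 ≤ d) (hs : 0 ≤ s) (hq : 0 < q) (hp : 0 < p)
    (hc : 0 < c) (hu : Measurable u) {ω : Set Y} (hω : MeasurableSet ω) {γ : Y → X} {K : ℝ≥0}
    (hγ : LipschitzOnWith K γ ω) (hγΩ : MapsTo γ ω Ω) :
    ∫⁻ x in ω, gagliardoDensity (μ.restrict ω) (s + q) p (u ∘ γ) x ∂μ ≤
      gagliardoCompConst d s A c q p * K ^ q *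
        ∫⁻ x in ω, gagliardoDensity (ν.restrict Ω) (d + q) p u (γ x) ∂μ := by
  rw [← lintegral_subtype_comap hω, ← lintegral_subtype_comap hω]
  simp only [← gagliardoDensity_comap_subtype μ hω]
  exact lintegral_gagliardoDensity_comp_le hν.restrict (hμ.comap_subtype hω) hd hs hq hp hc hu
    hγ.to_restrict fun x => hγΩ x.2

theorem fuglede_detector_fractional_general {σ : ℝ} (hν : LowerAhlforsRegularOn ν Ω d c)
    (hμ : UpperAhlforsRegular μ s A) (hd : 0 ≤ d) (hs : 0 ≤ s) (hσ : 0 < σ) (hp : 0 < p)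
    (hc : 0 < c) (hu : Measurable u) {ω : Set Y} (hω : MeasurableSet ω) {γ : Y → X} {K : ℝ≥0}
    (hγ : LipschitzOnWith K γ ω) (hγΩ : MapsTo γ ω Ω) :
    (∫⁻ x in ω, gagliardoDensity (μ.restrict ω) (s + σ * p) p (u ∘ γ) x ∂μ) ^ (1 / p) ≤
      gagliardoCompConst d s A c (σ * p) p ^ (1 / p) * K ^ σ *
        (∫⁻ x in ω, gagliardoDensity (ν.restrict Ω) (d + σ * p) p u (γ x) ∂μ) ^ (1 / p) := by
  have hp' : 0 ≤ 1 / p := by positivity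
  have hK : ((K : ℝ≥0∞) ^ (σ * p)) ^ (1 / p) = K ^ σ := by
    rw [← ENNReal.rpow_mul, mul_one_div, mul_div_cancel_right₀ _ hp.ne']
  rw [← hK, ← ENNReal.mul_rpow_of_nonneg _ _ hp', ← ENNReal.mul_rpow_of_nonneg _ _ hp']
  gcongr
  exact setLIntegral_gagliardoDensity_comp_le hν hμ hd hs (by positivity) hp hc hu hω hγ hγΩ

end Composition

section Euclidean

lemma upperAhlforsRegular_volume_eucl (n : ℕ) :
    UpperAhlforsRegular (volume : Measure (Eucl n)) n (volume.real (ball (0 : Eucl n) 1)) :=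
  fun x r hr => by
    rw [Measure.addHaar_ball_of_pos _ _ hr, finrank_euclideanSpace_fin, mul_comm,
      ENNReal.ofReal_mul measureReal_nonneg, ofReal_measureReal, Real.rpow_natCast]

lemma fugledeDetector_eq_gagliardoDensity (m : ℕ) (σ p : ℝ) (Ω : Set (Eucl m)) (u : Eucl m → ℝ) :
    fugledeDetector m σ p Ω u = gagliardoDensity (volume.restrict Ω) (m + σ * p) p u := by
  ext x
  simp only [fugledeDetector, gagliardoDensity, edist_eq_enorm_sub, enorm_eq_nnnorm]

lemma gagliardoSeminorm_eq_lintegral_gagliardoDensity (M : ℕ) (σ p : ℝ) (A : Set (Eucl M))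
    (u : Eucl M → ℝ) :
    gagliardoSeminorm M σ p A u =
      (∫⁻ x in A, gagliardoDensity (volume.restrict A) (M + σ * p) p u x) ^ (1 / p) := by
  simp only [gagliardoSeminorm, gagliardoPow, gagliardoDensity, edist_eq_enorm_sub, enorm_eq_nnnorm]

lemma gagliardoSeminorm_comp_le {m M : ℕ} {σ p c : ℝ} (hσ : 0 < σ) (hp : 0 < p) (hc : 0 < c)
    {Ω : Set (Eucl m)} (hΩ : LowerAhlforsRegularOn volume Ω m c) {u : Eucl m → ℝ}
    (hu : Measurable u) {ω : Set (Eucl M)} (hω : MeasurableSet ω) {γ : Eucl M → Eucl m} {K : ℝ≥0}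
    (hγ : LipschitzOnWith K γ ω) (hγΩ : MapsTo γ ω Ω) :
    gagliardoSeminorm M σ p ω (u ∘ γ) ≤
      gagliardoCompConst m M (volume.real (ball (0 : Eucl M) 1)) c (σ * p) p ^ (1 / p) * K ^ σ *
        (∫⁻ y in ω, fugledeDetector m σ p Ω u (γ y)) ^ (1 / p) := by
  rw [gagliardoSeminorm_eq_lintegral_gagliardoDensity, fugledeDetector_eq_gagliardoDensity]
  exact fuglede_detector_fractional_general hΩ (upperAhlforsRegular_volume_eucl M) m.cast_nonneg
    M.cast_nonneg hσ hp hc hu hω hγ hγΩ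

end Euclidean

/-- **Fuglede-type detector for fractional Sobolev regularity under composition.**
Let `m, M ≥ 1`, `0 < σ < 1`, `1 ≤ p < ∞`, `c > 0`. There is `C > 0` depending only on
`m, M, σ, p, c` such that: for every open `Ω ⊆ ℝ^m` with `|B_λ(z) ∩ Ω| ≥ c λ^m` for all
`z ∈ Ω` and `0 < λ ≤ (1/2) diam Ω`, every measurable `u : Ω → ℝ` with detector `w`, every
open `ω ⊆ ℝ^M` and every Lipschitz `γ : ω → Ω` (with Lipschitz constant `K`) such that
`w ∘ γ` is summable on `ω`, one has
`|u ∘ γ|_{W^{σ,p}(ω)} ≤ C K^σ (∫_ω w ∘ γ)^{1/p}`. -/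
theorem fuglede_detector_fractional
    (m M : ℕ) (hm : 1 ≤ m) (hM : 1 ≤ M) (σ p c : ℝ)
    (hσ0 : 0 < σ) (hσ1 : σ < 1) (hp : 1 ≤ p) (hc : 0 < c) :
    ∃ C : ℝ, 0 < C ∧
      ∀ (Ω : Set (Eucl m)), IsOpen Ω →
        (∀ z ∈ Ω, ∀ lam : ℝ, 0 < lam → 2 * ENNReal.ofReal lam ≤ EMetric.diam Ω →
          ENNReal.ofReal (c * lam ^ m) ≤ volume (Metric.ball z lam ∩ Ω)) →
        ∀ u : Eucl m → ℝ, Measurable u →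
          ∀ (ω : Set (Eucl M)), IsOpen ω →
            ∀ (γ : Eucl M → Eucl m) (K : ℝ≥0), LipschitzOnWith K γ ω →
              (∀ x ∈ ω, γ x ∈ Ω) →
              (∫⁻ y in ω, fugledeDetector m σ p Ω u (γ y)) < ⊤ →
              gagliardoSeminorm M σ p ω (fun y => u (γ y)) ≤
                ENNReal.ofReal C * (K : ℝ≥0∞) ^ σ *
                  (∫⁻ y in ω, fugledeDetector m σ p Ω u (γ y)) ^ (1 / p) := by
  have hp0 : 0 < p := one_pos.trans_le hp
  obtain ⟨C, hC, hle⟩ := exists_gagliardoCompConst_rpow_le_ofReal m M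
    (volume.real (ball (0 : Eucl M) 1)) c (mul_pos hσ0 hp0) hp0
  refine ⟨C, hC, fun Ω _ hΩ u hu ω hω γ K hγ hγΩ _ => ?_⟩
  have hreg : LowerAhlforsRegularOn volume Ω m c := fun z hz r hr hrΩ => by
    rw [Real.rpow_natCast]
    exact hΩ z hz r hr hrΩ
  exact (gagliardoSeminorm_comp_le hσ0 hp0 hc hreg hu hω.measurableSet hγ hγΩ).trans (by gcongr)
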